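/- Let (S,τ_S) be a Hausdorff topological monoid with zero 0_S (identity 1_S ≠ 0_S, jointly continuous multiplication) which is an inverse semigroup (for every x ∈ S there is a unique x⁻¹ ∈ S with x·x⁻¹·x = x and x⁻¹·x·x⁻¹ = x⁻¹) whose inversion map x ↦ x⁻¹ is continuous. Let Λ be a nonempty index set and let τ_B be a topology on the Brandt Λ⁰-extension B⁰_Λ(S) such that (B⁰_Λ(S),τ_B) is a Hausdorff topological semigroup and for some α ∈ Λ the natural map h_α : S → B⁰_Λ(S), h_α(s) = (α,s,α) for s ≠ 0_S and h_α(0_S) = 0, is a homeomorphism of (S,τ_S) onto the subspace (S)_{α,α}. If (B⁰_Λ(S),τ_B) is pseudocompact, then B⁰_Λ(S) is an inverse semigroup and its inversion map, given by 0 ↦ 0 and (α,a,β) ↦ (β,a⁻¹,α), is continuous with respect to τ_B. -/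

import Mathlib

/-- The underlying set of the Brandt `Λ`⁰-extension `B⁰_Λ(S)` of a semigroup `S` with
zero: `none` is the zero and a non-zero element is a triple `(α, s, β)` with `s` a
non-zero element of `S` and `α, β ∈ Λ`. -/
abbrev BExtZ (Λ : Type u) (S : Type v) [Zero S] :=
  Option (Λ × {s : S // s ≠ 0} × Λ)

open Classical in
/-- The multiplication of the Brandt `Λ`⁰-extension `B⁰_Λ(S)`:
`(α,a,β)·(γ,b,δ) = (α,ab,δ)` if `β = γ` and `ab ≠ 0`, and `= 0` otherwise; `0` is a
two-sided zero. -/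
noncomputable def bMulZ {Λ : Type u} {S : Type v} [SemigroupWithZero S] :
    BExtZ Λ S → BExtZ Λ S → BExtZ Λ S
  | some (α, a, β), some (γ, b, δ) =>
      if β = γ then
        if hzero : a.1 * b.1 = 0 then none
        else some (α, ⟨a.1 * b.1, hzero⟩, δ)
      else none
  | _, _ => none

open Classical in
/-- The natural map `h_α : S → B⁰_Λ(S)` sending `0` to the zero and a non-zero `s` to
`(α, s, α)`; its image is the subset `(S)_{α,α}`. -/
noncomputable def bNat {Λ : Type u} {S : Type v} [Zero S] (α : Λ) (s : S) :
    BExtZ Λ S :=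
  if h : s = 0 then none else some (α, ⟨s, h⟩, α)

/-- A topological space is pseudocompact if every locally finite family of non-empty
open subsets is finite. -/
def IsPseudocompact (X : Type*) [TopologicalSpace X] : Prop :=
  ∀ 𝒰 : Set (Set X), (∀ U ∈ 𝒰, IsOpen U ∧ U.Nonempty) →
    LocallyFinite (fun U : 𝒰 => (U : Set X)) → 𝒰.Finite

open Classical in
/-- The inversion map of the Brandt `Λ`⁰-extension `B⁰_Λ(S)` induced by an inversion
`inv` on `S`: `0 ↦ 0` and `(α,a,β) ↦ (β,a⁻¹,α)`.  (If `inv` maps non-zero elements to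
non-zero elements, as is the case for the inversion of an inverse monoid with zero,
the dite-branch producing `none` never occurs.) -/
noncomputable def bInvZ {Λ : Type u} {S : Type v} [Zero S] (inv : S → S) :
    BExtZ Λ S → BExtZ Λ S
  | some (α, a, β) =>
      if h : inv a.1 = 0 then none else some (β, ⟨inv a.1, h⟩, α)
  | none => none

/-!
The blocks `{(γ, a, δ) : a ≠ 0}` are open, pairwise disjoint and cover everything but `0`. Deleting
from them the closure of a neighbourhood `W` of `0` leaves a locally finite family, so
pseudocompactness puts all but finitely many blocks inside `closure W`. If `Λ` were infinite, then
for each `α` some `β` would have both `(α, 1, β)` and `(β, 1, α)` in `closure W`, so their product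
`(α, 1, α)` would lie in `closure (W * W)`; since `W * W` can be made arbitrarily small, this
contradicts the Hausdorff property. So `Λ` is finite, and `B⁰_Λ(S)` is the union of finitely many
closed copies `(S)_{γ,δ}` of `S`, each of which is mapped to `(S)_{δ,γ}` by the inversion of `S`.
-/

section Topology

open Filter Function Set Topology

section Pseudocompact

variable {X ι : Type*} [TopologicalSpace X] {U : ι → Set X}

theorem IsPseudocompact.finite_of_locallyFinite (hX : IsPseudocompact X)
    (hopen : ∀ i, IsOpen (U i)) (hne : ∀ i, (U i).Nonempty) (hU : LocallyFinite U) :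
    Finite ι := by
  have hrange : (range U).Finite :=
    hX _ (forall_mem_range.2 fun i => ⟨hopen i, hne i⟩) hU.on_range
  refine finite_univ_iff.1 (Finite.of_finite_fibers U (image_univ ▸ hrange) ?_)
  rintro _ ⟨i, -, rfl⟩
  obtain ⟨x, hx⟩ := hne i
  refine (hU.point_finite x).subset fun j hj => ?_
  have hji : U j = U i := hj.2
  rwa [← hji] at hx

theorem locallyFinite_diff_closure (hopen : ∀ i, IsOpen (U i)) (hdisj : Pairwise (Disjoint on U))
    {x₀ : X} (hcover : ∀ x ≠ x₀, ∃ i, x ∈ U i) {W : Set X} (hW : W ∈ 𝓝 x₀) :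
    LocallyFinite fun i => U i \ closure W := by
  intro x
  obtain rfl | hx := eq_or_ne x x₀
  · refine ⟨W, hW, finite_empty.subset ?_⟩
    rintro i ⟨y, hyU, hyW⟩
    exact hyU.2 (subset_closure hyW)
  · obtain ⟨i, hi⟩ := hcover x hx
    refine ⟨U i, (hopen i).mem_nhds hi, (finite_singleton i).subset ?_⟩
    rintro j ⟨y, hyj, hyi⟩
    exact hdisj.eq (not_disjoint_iff.2 ⟨y, hyj.1, hyi⟩)

theorem IsPseudocompact.eventually_subset_closure (hX : IsPseudocompact X)
    (hopen : ∀ i, IsOpen (U i)) (hdisj : Pairwise (Disjoint on U))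
    {x₀ : X} (hcover : ∀ x ≠ x₀, ∃ i, x ∈ U i) {W : Set X} (hW : W ∈ 𝓝 x₀) :
    ∀ᶠ i in cofinite, U i ⊆ closure W :=
  hX.finite_of_locallyFinite (ι := {i | ¬ U i ⊆ closure W})
    (fun i => (hopen i).sdiff isClosed_closure)
    (fun i => sdiff_nonempty.2 i.2)
    ((locallyFinite_diff_closure hopen hdisj hcover hW).comp_injective Subtype.val_injective)

end Pseudocompact

theorem exists_nhds_zero_closure_mul_ne {M : Type*} [MulZeroClass M] [TopologicalSpace M]
    [T2Space M] [ContinuousMul M] {x : M} (hx : x ≠ 0) :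
    ∃ W ∈ 𝓝 (0 : M), ∀ a ∈ closure W, ∀ b ∈ closure W, a * b ≠ x := by
  obtain ⟨A, V, hA, hV, hxA, h0V, hAV⟩ := t2_separation hx
  have hmul : Tendsto (fun p : M × M => p.1 * p.2) (𝓝 0 ×ˢ 𝓝 0) (𝓝 0) := by
    simpa [nhds_prod_eq] using tendsto_mul (a := (0 : M)) (b := 0)
  obtain ⟨W, hW, hWV⟩ := mem_prod_self_iff.1 (hmul (hV.mem_nhds h0V))
  refine ⟨W, hW, ?_⟩
  rintro a ha b hb rfl
  have hab : a * b ∈ closure V :=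
    map_mem_closure₂ continuous_mul ha hb fun c hc d hd => hWV (mk_mem_prod hc hd)
  exact disjoint_left.1 (hAV.closure_right hA) hxA hab

end Topology

namespace BExtZ

open Filter Function Set Topology

variable {Λ : Type u} {S : Type v}

open Classical in
/-- The map `S → B⁰_Λ(S)`, `s ↦ (γ, s, δ)`, `0 ↦ 0`, whose range is `(S)_{γ,δ}`. Viewing
`B⁰_Λ(S)` as the set of `Λ × Λ` matrices with at most one non-zero entry, this is the analogue of
`Matrix.single`. -/
noncomputable def single [Zero S] (γ δ : Λ) (s : S) : BExtZ Λ S :=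
  if hs : s = 0 then none else some (γ, ⟨s, hs⟩, δ)

section Zero

variable [Zero S]

/-- The zero `none` of `B⁰_Λ(S)`. -/
scoped instance : Zero (BExtZ Λ S) := ⟨none⟩

@[simp]
theorem single_zero (γ δ : Λ) : single γ δ (0 : S) = 0 :=
  dif_pos rfl

@[simp]
theorem single_eq_zero {γ δ : Λ} {s : S} : single γ δ s = 0 ↔ s = 0 := by
  classical exact dite_eq_left_iff.trans (by simp)

theorem single_of_ne_zero (γ δ : Λ) {s : S} (hs : s ≠ 0) : single γ δ s = some (γ, ⟨s, hs⟩, δ) :=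
  dif_neg hs

@[elab_as_elim]
theorem single_cases {motive : BExtZ Λ S → Prop} (zero : motive 0)
    (single : ∀ γ δ s, s ≠ 0 → motive (single γ δ s)) (x : BExtZ Λ S) : motive x :=
  match x with
  | none => zero
  | some (γ, ⟨s, hs⟩, δ) => single_of_ne_zero γ δ hs ▸ single γ δ s hs

theorem single_injective (γ δ : Λ) : Injective (single γ δ : S → BExtZ Λ S) := by
  intro s t hst
  unfold single at hst
  split_ifs at hst <;> simp_all

/-- The set of the `(γ, s, δ)` with `s ≠ 0`, that is, `(S)_{γ,δ}` without the zero. -/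
def block (γ δ : Λ) : Set (BExtZ Λ S) :=
  single γ δ '' {0}ᶜ

theorem pairwise_disjoint_block :
    Pairwise (Disjoint on fun p : Λ × Λ => (block p.1 p.2 : Set (BExtZ Λ S))) := by
  rintro ⟨γ, δ⟩ ⟨γ', δ'⟩ hne
  refine disjoint_left.2 ?_
  rintro _ ⟨s, hs, rfl⟩ ⟨t, ht, hst⟩
  rw [single_of_ne_zero _ _ hs, single_of_ne_zero _ _ ht] at hst
  simp_all

theorem exists_mem_block {x : BExtZ Λ S} (hx : x ≠ 0) : ∃ p : Λ × Λ, x ∈ block p.1 p.2 := by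
  cases x using single_cases with
  | zero => exact absurd rfl hx
  | single γ δ s hs => exact ⟨(γ, δ), s, hs, rfl⟩

theorem zero_notMem_block (γ δ : Λ) : (0 : BExtZ Λ S) ∉ block γ δ := by
  rintro ⟨s, hs, hs₀⟩
  exact hs (single_eq_zero.1 hs₀)

theorem compl_range_single (γ δ : Λ) :
    (range (single γ δ : S → BExtZ Λ S))ᶜ = ⋃ p ≠ (γ, δ), block p.1 p.2 := by
  ext x
  simp only [mem_compl_iff, mem_iUnion, exists_prop]
  constructor
  · intro hx
    have hx₀ : x ≠ 0 := fun h => hx ⟨0, h ▸ single_zero γ δ⟩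
    obtain ⟨p, hp⟩ := exists_mem_block hx₀
    refine ⟨p, ?_, hp⟩
    rintro rfl
    exact hx (image_subset_range _ _ hp)
  · rintro ⟨p, hne, hp⟩ ⟨s, rfl⟩
    have hs : s ≠ 0 := by
      rintro rfl
      rw [single_zero] at hp
      exact zero_notMem_block p.1 p.2 hp
    exact disjoint_left.1 (pairwise_disjoint_block hne) hp ⟨s, hs, rfl⟩

theorem bInvZ_single {f : S → S} (hf : f 0 = 0) (γ δ : Λ) (s : S) :
    bInvZ f (single γ δ s) = single δ γ (f s) := by
  obtain rfl | hs := eq_or_ne s 0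
  · rw [single_zero, hf, single_zero]
    rfl
  · rw [single_of_ne_zero _ _ hs]
    rfl

end Zero

section Algebra

variable [SemigroupWithZero S]

/-- The multiplication `bMulZ` of `B⁰_Λ(S)`. -/
noncomputable scoped instance : MulZeroClass (BExtZ Λ S) where
  mul := bMulZ
  zero_mul _ := rfl
  mul_zero x := by cases x <;> rfl

@[simp]
theorem single_mul_single_same (γ β δ : Λ) (s t : S) :
    single γ β s * single β δ t = single γ δ (s * t) := by
  obtain rfl | hs := eq_or_ne s 0
  · simp
  obtain rfl | ht := eq_or_ne t 0
  · simp
  rw [single_of_ne_zero _ _ hs, single_of_ne_zero _ _ ht]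
  exact if_pos rfl

theorem single_mul_single_of_ne {β β' : Λ} (hβ : β ≠ β') (γ δ : Λ) (s t : S) :
    single γ β s * single β' δ t = 0 := by
  obtain rfl | hs := eq_or_ne s 0
  · simp
  obtain rfl | ht := eq_or_ne t 0
  · simp
  rw [single_of_ne_zero _ _ hs, single_of_ne_zero _ _ ht]
  exact if_neg hβ

theorem mem_block_of_mul_mul_ne_zero {γ β β' δ : Λ} {s t : S} {x : BExtZ Λ S}
    (hx : single γ β s * x * single β' δ t ≠ 0) : x ∈ block β β' := by
  cases x using single_cases with
  | zero => simp at hx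
  | single ε ζ u hu =>
    obtain rfl : β = ε := by
      by_contra hne
      simp [single_mul_single_of_ne hne] at hx
    obtain rfl : ζ = β' := by
      by_contra hne
      simp [single_mul_single_of_ne hne] at hx
    exact ⟨u, hu, rfl⟩

theorem existsUnique_inverse (hS : ∀ s : S, ∃! t, s * t * s = s ∧ t * s * t = t)
    (x : BExtZ Λ S) : ∃! y, x * y * x = x ∧ y * x * y = y := by
  cases x using single_cases with
  | zero => exact ⟨0, by simp, fun y hy => by simpa using hy.2.symm⟩
  | single γ δ s hs =>
    obtain ⟨t, ⟨hst, hts⟩, hunique⟩ := hS s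
    refine ⟨single δ γ t, by simp [hst, hts], ?_⟩
    rintro y ⟨hxy, hyx⟩
    have hy : y ∈ block δ γ :=
      mem_block_of_mul_mul_ne_zero (by rwa [hxy, ne_eq, single_eq_zero])
    obtain ⟨u, -, rfl⟩ := hy
    simp only [single_mul_single_same] at hxy hyx
    rw [hunique u ⟨single_injective _ _ hxy, single_injective _ _ hyx⟩]

end Algebra

theorem mem_block_iff [MonoidWithZero S] {γ δ : Λ} {x : BExtZ Λ S} :
    x ∈ block γ δ ↔ single γ γ 1 * x * single δ δ 1 ≠ 0 := by
  refine ⟨?_, mem_block_of_mul_mul_ne_zero⟩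
  rintro ⟨s, hs, rfl⟩
  simpa using hs

section Topology

variable [MonoidWithZero S] [TopologicalSpace (BExtZ Λ S)] [ContinuousMul (BExtZ Λ S)]

theorem isOpen_block [T1Space (BExtZ Λ S)] (γ δ : Λ) : IsOpen (block γ δ : Set (BExtZ Λ S)) := by
  have hblock : (block γ δ : Set (BExtZ Λ S)) =
      (fun x => single γ γ 1 * x * single δ δ 1) ⁻¹' {0}ᶜ :=
    Set.ext fun _ => mem_block_iff
  rw [hblock]
  exact isOpen_compl_singleton.preimage (by fun_prop)

theorem isClosed_range_single [T1Space (BExtZ Λ S)] (γ δ : Λ) :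
    IsClosed (range (single γ δ : S → BExtZ Λ S)) := by
  rw [← isOpen_compl_iff, compl_range_single]
  exact isOpen_biUnion fun p _ => isOpen_block p.1 p.2

/-- All `(S)_{γ,δ}` are translates of one another by the matrix units `(γ, 1, δ)`. -/
theorem isInducing_single [TopologicalSpace S] {α β : Λ}
    (hαβ : IsInducing (single α β : S → BExtZ Λ S)) (γ δ : Λ) :
    IsInducing (single γ δ : S → BExtZ Λ S) := by
  have translate (γ δ γ' δ' : Λ) : (single γ' δ' : S → BExtZ Λ S) =
      (fun x => single γ' γ 1 * x * single δ δ' 1) ∘ single γ δ := by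
    ext1 s
    simp
  have hcont : Continuous (single γ δ : S → BExtZ Λ S) := by
    rw [translate α β]
    exact Continuous.comp (by fun_prop) hαβ.continuous
  rw [translate γ δ] at hαβ
  exact .of_comp hcont (by fun_prop) hαβ

theorem finite_of_isPseudocompact [Nontrivial S] [T2Space (BExtZ Λ S)]
    (hpc : IsPseudocompact (BExtZ Λ S)) : Finite Λ := by
  by_contra hfin
  have : Infinite Λ := not_finite_iff_infinite.1 hfin
  obtain ⟨α⟩ : Nonempty Λ := inferInstance
  have hα : (single α α (1 : S) : BExtZ Λ S) ≠ 0 := by simp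
  obtain ⟨W, hW, hne⟩ := exists_nhds_zero_closure_mul_ne hα
  have hclosure : ∀ᶠ p : Λ × Λ in cofinite, single p.1 p.2 (1 : S) ∈ closure W :=
    (hpc.eventually_subset_closure (fun p => isOpen_block p.1 p.2) pairwise_disjoint_block
      (fun _ => exists_mem_block) hW).mono fun p hp => hp ⟨1, one_ne_zero, rfl⟩
  obtain ⟨β, hαβ, hβα⟩ : ∃ β, single α β (1 : S) ∈ closure W ∧ single β α (1 : S) ∈ closure W :=
    (((Prod.mk_right_injective α).tendsto_cofinite.eventually hclosure).and
      ((Prod.mk_left_injective α).tendsto_cofinite.eventually hclosure)).exists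
  exact hne _ hαβ _ hβα (by simp)

theorem continuous_of_comp_single [Finite Λ] [T1Space (BExtZ Λ S)] [TopologicalSpace S]
    {α β : Λ} (hαβ : IsInducing (single α β : S → BExtZ Λ S))
    {Y : Type*} [TopologicalSpace Y] {f : BExtZ Λ S → Y}
    (hf : ∀ γ δ, Continuous (f ∘ single γ δ)) : Continuous f := by
  have hcover : ⋃ p : Λ × Λ, range (single p.1 p.2 : S → BExtZ Λ S) = univ := by
    refine eq_univ_of_forall fun x => mem_iUnion.2 ?_
    cases x using single_cases with
    | zero => exact ⟨(α, β), 0, single_zero _ _⟩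
    | single γ δ s _ => exact ⟨(γ, δ), s, rfl⟩
  refine (locallyFinite_of_finite _).continuous hcover (fun p => isClosed_range_single _ _) ?_
  intro p
  rw [← image_univ, (isInducing_single hαβ p.1 p.2).continuousOn_image_iff, continuousOn_univ]
  exact hf p.1 p.2

theorem continuous_bInvZ [Finite Λ] [T1Space (BExtZ Λ S)] [TopologicalSpace S]
    {α β : Λ} (hαβ : IsInducing (single α β : S → BExtZ Λ S))
    {f : S → S} (hf : Continuous f) (hf₀ : f 0 = 0) :
    Continuous (bInvZ (Λ := Λ) f) := by
  refine continuous_of_comp_single hαβ fun γ δ => ?_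
  have hcomp : bInvZ f ∘ single γ δ = single δ γ ∘ f := funext (bInvZ_single hf₀ γ δ)
  rw [hcomp]
  exact (isInducing_single hαβ δ γ).continuous.comp hf

end Topology

end BExtZ

/-- Let `(S,τ_S)` be a Hausdorff topological monoid with zero
(`1 ≠ 0`) which is an inverse semigroup (with inversion `inv`, continuous), and let
the Brandt `Λ`⁰-extension `B⁰_Λ(S)` carry a Hausdorff topology with jointly continuous
multiplication such that for some `α ∈ Λ` the natural map `h_α : S → B⁰_Λ(S)` is a
homeomorphism onto the subspace `(S)_{α,α}`.  If `B⁰_Λ(S)` is pseudocompact, then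
`B⁰_Λ(S)` is an inverse semigroup and its inversion map `0 ↦ 0`,
`(α,a,β) ↦ (β,a⁻¹,α)` is continuous. -/
theorem stmt_12 {Λ : Type u} {S : Type v} [Nonempty Λ] [MonoidWithZero S]
    (hone : (1 : S) ≠ 0)
    [TopologicalSpace S] [T2Space S]
    (contMulS : Continuous fun p : S × S => p.1 * p.2)
    (inv : S → S) (continv : Continuous inv)
    (hinv : ∀ x : S, x * inv x * x = x ∧ inv x * x * inv x = inv x)
    (hinvu : ∀ x y : S, x * y * x = x → y * x * y = y → y = inv x)
    [TopologicalSpace (BExtZ Λ S)] [T2Space (BExtZ Λ S)]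
    (contMul : Continuous fun p : BExtZ Λ S × BExtZ Λ S => bMulZ p.1 p.2)
    (α : Λ) (hembed : Topology.IsEmbedding (bNat (Λ := Λ) (S := S) α))
    (hpc : IsPseudocompact (BExtZ Λ S)) :
    (∀ x : BExtZ Λ S, ∃! y : BExtZ Λ S,
        bMulZ (bMulZ x y) x = x ∧ bMulZ (bMulZ y x) y = y) ∧
    Continuous (bInvZ (Λ := Λ) inv) := by
  have : Nontrivial S := nontrivial_of_ne 1 0 hone
  open scoped BExtZ in
  have : ContinuousMul (BExtZ Λ S) := ⟨contMul⟩
  have : Finite Λ := BExtZ.finite_of_isPseudocompact hpc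
  have inv_zero : inv 0 = 0 := by simpa using (hinv 0).2.symm
  have hα : Topology.IsInducing (BExtZ.single α α : S → BExtZ Λ S) := hembed.isInducing
  exact ⟨BExtZ.existsUnique_inverse fun s => ⟨inv s, hinv s, fun t ht => hinvu s t ht.1 ht.2⟩,
    BExtZ.continuous_bInvZ hα continv inv_zero⟩
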